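/- Let g : E → ℤ/4ℤ be an H-form on a finite-dimensional ℤ/2-vector space E with associated bilinear form C, and let O(E,g) be the group of linear maps T : E → E with g(Tx) = g(x) for all x. Then O(E,g) is generated by the set of elements of the following two forms: (1) T_a for a ∈ E with g(a) = 2; (2) S_{a,b} for a,b ∈ E with g(a) = g(b) = g(a+b) = 0. -/

import Mathlib

/-!
Let `T` preserve `g`, hence `C`, and put `N = T - 1 = T + 1`. For `d = N x` the identity
`g (x + d) = g x` reads `g d = 2 C(x, d)`, so `g d ∈ {0, 2}`, and `C(y, d) = 0` for every `y` fixed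
by `T`. The proof enlarges the fixed space of `T` by composing with involutive generators.

* If some `d = N x` has `g d = 2`, then `C(x, d) = 1`, so `T_d` sends `x` to `T x` and fixes
  `ker N`. Hence `T_d ∘ T` fixes `ker N` and `x`.
* Otherwise `g` vanishes on the image of `N`, so `B(x, y) = C(x, N y)` is alternating, hence
  symmetric. If `N x ≠ 0`, non-degeneracy of `C` gives `y` with `B(y, x) = 1 = B(x, y)`. With
  `a = N x` and `b = N y`, the map `S_{a,b} : z ↦ z + C(z, b) a + C(z, a) b` fixes `ker N` and sends
  `x` to `x + a = T x`. Hence `S_{a,b} ∘ T` fixes `ker N` and `x`.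

Since `E` is finite-dimensional, this terminates at `T = 1`.
-/

/-- The transvection `T_a : x ↦ x + C(x,a)·a`, as an endomorphism. -/
def TmapEnd {E : Type*} [AddCommGroup E] [Module (ZMod 2) E]
    (C : E →ₗ[ZMod 2] E →ₗ[ZMod 2] ZMod 2) (a : E) : Module.End (ZMod 2) E :=
  LinearMap.id + (C.flip a).smulRight a

section HForm

variable {E : Type*} [AddCommGroup E] [Module (ZMod 2) E]
  {C : E →ₗ[ZMod 2] E →ₗ[ZMod 2] ZMod 2} {g : E → ZMod 4}

lemma zmod_two_cases : ∀ c : ZMod 2, c = 0 ∨ c = 1 := by decide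

lemma TmapEnd_apply (a x : E) : TmapEnd C a x = x + C x a • a := rfl

lemma hform_zero (hadd : ∀ x y : E, g (x + y) = g x + g y + 2 * ((C x y).val : ZMod 4)) :
    g 0 = 0 := by
  simpa using hadd 0 0

/-- Since `0 = g (a + a) = 2 g a + 2 C(a, a)`, the parity of `g a` is `C(a, a)`. -/
lemma hform_self (hadd : ∀ x y : E, g (x + y) = g x + g y + 2 * ((C x y).val : ZMod 4))
    {a : E} (ha : g a = 0 ∨ g a = 2) : C a a = 0 := by
  have h := hadd a a
  rw [ZModModule.add_self, hform_zero hadd] at h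
  generalize C a a = c at h ⊢
  generalize g a = t at h ha
  revert c t
  decide

lemma hform_ortho (hadd : ∀ x y : E, g (x + y) = g x + g y + 2 * ((C x y).val : ZMod 4))
    {a b : E} (ha : g a = 0) (hb : g b = 0) (hab : g (a + b) = 0) : C a b = 0 := by
  have h := hadd a b
  rw [ha, hb, hab] at h
  generalize C a b = c at h ⊢
  revert c
  decide

/-- A map preserving `g` preserves the associated bilinear form. -/
lemma preserves_form
    (hadd : ∀ x y : E, g (x + y) = g x + g y + 2 * ((C x y).val : ZMod 4))
    {T : Module.End (ZMod 2) E} (hT : ∀ x, g (T x) = g x) (x y : E) :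
    C (T x) (T y) = C x y := by
  have h := hadd (T x) (T y)
  rw [← map_add, hT, hT, hT, hadd x y] at h
  have h' := add_left_cancel h
  generalize C (T x) (T y) = c at h' ⊢
  generalize C x y = d at h' ⊢
  revert c d
  decide

lemma TmapEnd_preserves
    (hadd : ∀ x y : E, g (x + y) = g x + g y + 2 * ((C x y).val : ZMod 4))
    {a : E} (ha : g a = 2) (x : E) : g (TmapEnd C a x) = g x := by
  rw [TmapEnd_apply]
  rcases zmod_two_cases (C x a) with h | h
  · simp [h]
  · rw [h, one_smul, hadd, ha, h, add_assoc]
    exact add_eq_left.2 (by decide)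

lemma TmapEnd_involutive {a : E} (ha : C a a = 0) : TmapEnd C a * TmapEnd C a = 1 := by
  ext x
  simp [TmapEnd_apply, ha, add_assoc, ZModModule.add_self]

/-- The map `S_{a,b}` for `a, b` spanning a totally isotropic subspace. -/
lemma Smap_apply (hsymm : ∀ x y : E, C x y = C y x) {a b : E}
    (ha : C a a = 0) (hb : C b b = 0) (hab : C a b = 0) (x : E) :
    (TmapEnd C a * TmapEnd C b * TmapEnd C (a + b)) x = x + C x b • a + C x a • b := by
  have hba : C b a = 0 := by rw [hsymm, hab]
  simp only [Module.End.mul_apply, TmapEnd_apply, map_add, map_smul,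
    ha, hb, hab, hba, add_zero, zero_smul, smul_add, add_smul]
  -- the terms `C(x, a) • a` and `C(x, b) • b` each occur twice
  have h1 := ZModModule.add_self (C x a • a)
  have h2 := ZModModule.add_self (C x b • b)
  calc _ = x + C x b • a + C x a • b + (C x a • a + C x a • a) + (C x b • b + C x b • b) := by
        abel
    _ = _ := by rw [h1, h2, add_zero, add_zero]

lemma Smap_preserves (hsymm : ∀ x y : E, C x y = C y x)
    (hadd : ∀ x y : E, g (x + y) = g x + g y + 2 * ((C x y).val : ZMod 4))
    {a b : E} (ha : g a = 0) (hb : g b = 0) (hab : g (a + b) = 0) (x : E) :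
    g ((TmapEnd C a * TmapEnd C b * TmapEnd C (a + b)) x) = g x := by
  have h := hform_ortho hadd ha hb hab
  rw [Smap_apply hsymm (hform_self hadd (.inl ha)) (hform_self hadd (.inl hb)) h]
  rcases zmod_two_cases (C x a) with h1 | h1 <;> rcases zmod_two_cases (C x b) with h2 | h2
  · simp [h1, h2]
  · simp [h1, h2, hadd x a, ha]
  · simp [h1, h2, hadd x b, hb]
  · have : (2 : ZMod 4) * ((1 + 1 : ZMod 2).val : ZMod 4) = 0 := by decide
    rw [h1, h2, one_smul, one_smul, add_assoc, hadd, hab, map_add, h1, h2, this, add_zero,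
      add_zero]

lemma Smap_involutive (hsymm : ∀ x y : E, C x y = C y x) {a b : E}
    (ha : C a a = 0) (hb : C b b = 0) (hab : C a b = 0) :
    (TmapEnd C a * TmapEnd C b * TmapEnd C (a + b)) *
      (TmapEnd C a * TmapEnd C b * TmapEnd C (a + b)) = 1 := by
  have hba : C b a = 0 := by rw [hsymm, hab]
  ext x
  rw [Module.End.mul_apply, Smap_apply hsymm ha hb hab, Smap_apply hsymm ha hb hab]
  simp only [map_add, map_smul, LinearMap.add_apply, LinearMap.smul_apply, ha, hb, hab, hba,
    smul_zero, add_zero, Module.End.one_apply]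
  have h1 := ZModModule.add_self (C x b • a)
  have h2 := ZModModule.add_self (C x a • b)
  calc _ = x + (C x b • a + C x b • a) + (C x a • b + C x a • b) := by abel
    _ = x := by rw [h1, h2, add_zero, add_zero]

/-- The image of `T - 1` is orthogonal to the fixed vectors of an isometry `T`. -/
lemma fixed_ortho {T : Module.End (ZMod 2) E} (hC : ∀ x y, C (T x) (T y) = C x y)
    {z : E} (hz : T z = z) (x : E) : C z (T x + x) = 0 := by
  have h := hC z x
  rw [hz] at h
  rw [map_add, h, ZModModule.add_self]

/-- For `g`-preserving `T`, `g (T x - x) = 2 C(x, T x - x)`. -/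
lemma hform_displacement
    (hadd : ∀ x y : E, g (x + y) = g x + g y + 2 * ((C x y).val : ZMod 4))
    {T : Module.End (ZMod 2) E} (hT : ∀ x, g (T x) = g x) (x : E) :
    (g (T x + x) = 2 ∧ C x (T x + x) = 1) ∨ (g (T x + x) = 0 ∧ C x (T x + x) = 0) := by
  have h := hadd x (T x + x)
  have hx : x + (T x + x) = T x := by
    rw [add_left_comm, ZModModule.add_self, add_zero]
  rw [hx, hT, add_assoc] at h
  have h' := left_eq_add.1 h
  generalize C x (T x + x) = c at h' ⊢
  generalize g (T x + x) = t at h' ⊢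
  revert c t
  decide

/-- Composing a non-identity `g`-preserving map with a suitable involutive generator keeps all its
fixed vectors and adds a new one. -/
lemma exists_generator (hsymm : ∀ x y : E, C x y = C y x)
    (hnd : ∀ x : E, (∀ y : E, C x y = 0) → x = 0)
    (hadd : ∀ x y : E, g (x + y) = g x + g y + 2 * ((C x y).val : ZMod 4))
    {T : Module.End (ZMod 2) E} (hT : ∀ x, g (T x) = g x) (hne : T ≠ 1) :
    ∃ S ∈ ({T | ∃ a : E, g a = 2 ∧ T = TmapEnd C a} ∪
       {T | ∃ a b : E, g a = 0 ∧ g b = 0 ∧ g (a + b) = 0 ∧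
          T = TmapEnd C a * TmapEnd C b * TmapEnd C (a + b)} : Set (Module.End (ZMod 2) E)),
      S * S = 1 ∧ (∀ x, g (S x) = g x) ∧ (∀ z, T z = z → S z = z) ∧
        ∃ x, T x ≠ x ∧ S x = T x := by
  have hC := preserves_form hadd hT
  have hxd (x : E) : x + (T x + x) = T x := by
    rw [add_left_comm, ZModModule.add_self, add_zero]
  by_cases hd : ∃ x, g (T x + x) = 2
  · obtain ⟨x, hx⟩ := hd
    have hCx : C x (T x + x) = 1 := by
      rcases hform_displacement hadd hT x with h | h
      · exact h.2
      · exact absurd (hx.symm.trans h.1) (by decide)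
    refine ⟨TmapEnd C (T x + x), .inl ⟨_, hx, rfl⟩,
      TmapEnd_involutive (hform_self hadd (.inr hx)), TmapEnd_preserves hadd hx, ?_, x, ?_, ?_⟩
    · intro z hz
      rw [TmapEnd_apply, fixed_ortho hC hz, zero_smul, add_zero]
    · intro h
      rw [h, ZModModule.add_self, map_zero] at hCx
      exact zero_ne_one hCx
    · rw [TmapEnd_apply, hCx, one_smul, hxd]
  · have h0 (x : E) : g (T x + x) = 0 ∧ C x (T x + x) = 0 :=
      (hform_displacement hadd hT x).resolve_left fun h => hd ⟨x, h.1⟩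
    obtain ⟨x, hx⟩ : ∃ x, T x ≠ x := by
      by_contra! h
      exact hne (LinearMap.ext h)
    have hx0 : T x + x ≠ 0 := fun h => hx (by rw [← hxd x, h, add_zero])
    obtain ⟨y, hy⟩ : ∃ y, C (T x + x) y ≠ 0 := by
      by_contra! h
      exact hx0 (hnd _ h)
    -- an alternating form is symmetric, so `B(x, y) = B(y, x) = 1`
    have hB : C x (T y + y) = 1 := by
      have h1 := (zmod_two_cases _).resolve_left hy
      rw [hsymm] at h1
      have h2 := (h0 (x + y)).2
      have e : T (x + y) + (x + y) = (T x + x) + (T y + y) := by rw [map_add]; abel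
      rw [e, map_add C, LinearMap.add_apply, map_add, map_add (C y), (h0 x).2, (h0 y).2, h1,
        zero_add, add_zero] at h2
      generalize C x (T y + y) = c at h2 ⊢
      revert c
      decide
    have hab : g ((T x + x) + (T y + y)) = 0 := by
      have h2 := (h0 (x + y)).1
      have e : T (x + y) + (x + y) = (T x + x) + (T y + y) := by rw [map_add]; abel
      rwa [e] at h2
    have ha := (h0 x).1
    have hb := (h0 y).1
    have haa := hform_self hadd (.inl ha)
    have hbb := hform_self hadd (.inl hb)
    have hCab := hform_ortho hadd ha hb hab
    refine ⟨_, .inr ⟨_, _, ha, hb, hab, rfl⟩, Smap_involutive hsymm haa hbb hCab,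
      Smap_preserves hsymm hadd ha hb hab, ?_, x, hx, ?_⟩
    · intro z hz
      rw [Smap_apply hsymm haa hbb hCab, fixed_ortho hC hz, fixed_ortho hC hz, zero_smul,
        zero_smul, add_zero, add_zero]
    · rw [Smap_apply hsymm haa hbb hCab, hB, (h0 x).2, one_smul, zero_smul, add_zero, hxd]

end HForm

/-- `O(E,g)` is generated by the transvections `T_a` with `g(a) = 2`
together with the maps `S_{a,b} = T_a ∘ T_b ∘ T_{a+b}` with `g(a) = g(b) = g(a+b) = 0`. -/
theorem orthogonal_group_generated_by_Tmap_and_Smap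
    {E : Type*} [AddCommGroup E] [Module (ZMod 2) E] [FiniteDimensional (ZMod 2) E]
    (C : E →ₗ[ZMod 2] E →ₗ[ZMod 2] ZMod 2) (g : E → ZMod 4)
    (hsymm : ∀ x y : E, C x y = C y x)
    (hnd : ∀ x : E, (∀ y : E, C x y = 0) → x = 0)
    (hadd : ∀ x y : E, g (x + y) = g x + g y + 2 * ((C x y).val : ZMod 4))
    (hodd : ∃ x : E, g x = 1 ∨ g x = 3) :
    (Submonoid.closure
      ({T | ∃ a : E, g a = 2 ∧ T = TmapEnd C a} ∪
       {T | ∃ a b : E, g a = 0 ∧ g b = 0 ∧ g (a + b) = 0 ∧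
          T = TmapEnd C a * TmapEnd C b * TmapEnd C (a + b)}) :
      Set (Module.End (ZMod 2) E)) =
    {T : Module.End (ZMod 2) E | ∀ x : E, g (T x) = g x} := by
  apply Set.Subset.antisymm
  · intro T hT
    induction hT using Submonoid.closure_induction with
    | mem T hT =>
      rcases hT with ⟨a, ha, rfl⟩ | ⟨a, b, ha, hb, hab, rfl⟩
      · exact TmapEnd_preserves hadd ha
      · exact Smap_preserves hsymm hadd ha hb hab
    | one => exact fun x => rfl
    | mul S T _ _ hS hT => exact fun x => (hS (T x)).trans (hT x)
  · intro T hT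
    -- Noetherian induction on the fixed space, ordered by reverse inclusion
    induction hF : LinearMap.eqLocus T (1 : Module.End (ZMod 2) E) using
      WellFoundedGT.induction generalizing T with
    | ind F ih =>
      by_cases hne : T = 1
      · rw [hne]
        exact Submonoid.one_mem _
      obtain ⟨S, hS, hSS, hSg, hfix, x, hx, hSx⟩ := exists_generator hsymm hnd hadd hT hne
      have hlt : F < LinearMap.eqLocus (S * T) (1 : Module.End (ZMod 2) E) := by
        rw [← hF]
        refine SetLike.lt_iff_le_and_exists.2 ⟨fun z hz => ?_, x, ?_, fun h => hx h⟩
        · have hz : T z = z := hz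
          change S (T z) = z
          rw [hz, hfix z hz]
        · change S (T x) = x
          rw [← hSx]
          exact LinearMap.congr_fun hSS x
      have hmem := ih _ hlt (T := S * T) (fun z => (hSg (T z)).trans (hT z)) rfl
      have e : T = S * (S * T) := by rw [← mul_assoc, hSS, one_mul]
      rw [e]
      exact Submonoid.mul_mem _ (Submonoid.subset_closure hS) hmem
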